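/- arXiv:1307.6944 — 2 statements merged into one kernel-verified Lean document; each statement's English description precedes it below -/
import Mathlib

section
/- Every 2-intersecting hypergraph (with all edges of size at least 2) has a vertex coloring with at most 5 colors such that every edge e receives at least min(|e|, 3) distinct colors. -/
/-!
Pass to the inclusion-minimal edges, which form a 2-intersecting antichain `M`; three colours on
each of them suffice. If `M` has only one edge, two of its vertices lie in every edge of `H`.

If any three edges of `M` meet, take distinct `e`, `f` with `e ∩ f` minimal and use the classes
`{a}`, `(e ∩ f) \ {a}`, `e \ f`, `f \ e` and the rest. Otherwise take `e`, `f`, `g` with no common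
vertex and `e ∪ f ∪ g` minimal: an edge inside this union that avoids `f ∩ g` must contain all
vertices private to `e`, that is, in neither `f` nor `g`. One colouring works when two members of
some such triple have private vertices, another when this never happens.
-/

open Finset

section Colors

variable {V α : Type*} [DecidableEq α]

theorem three_le_card_image {c : V → α} {h : Finset V} {x y z : V} (hx : x ∈ h) (hy : y ∈ h)
    (hz : z ∈ h) (hxy : c x ≠ c y) (hxz : c x ≠ c z) (hyz : c y ≠ c z) : 3 ≤ #(h.image c) :=
  two_lt_card.2 ⟨c x, mem_image_of_mem c hx, c y, mem_image_of_mem c hy, c z,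
    mem_image_of_mem c hz, hxy, hxz, hyz⟩

theorem exists_coloring_of_common_pair [Fintype α] (hα : 3 ≤ Fintype.card α) {a b : V}
    (hab : a ≠ b) :
    ∃ c : V → α, ∀ e : Finset V, a ∈ e → b ∈ e → min #e 3 ≤ #(e.image c) := by
  classical
  obtain ⟨i, j, k, hij, hik, hjk⟩ := Fintype.two_lt_card_iff.1 hα
  let c : V → α := fun v ↦ if v = a then i else if v = b then j else k
  refine ⟨c, fun e ha hb ↦ ?_⟩
  by_cases hthird : ∃ v ∈ e, v ≠ a ∧ v ≠ b
  · obtain ⟨v, hv, hva, hvb⟩ := hthird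
    exact (min_le_right _ _).trans <|
      three_le_card_image ha hb hv (by grind) (by grind) (by grind)
  · have hinj : Set.InjOn c e := by
      intro v hv w hw hvw
      grind
    exact (min_le_left _ _).trans (card_image_of_injOn hinj).ge

end Colors

section TwoIntersecting

variable {V : Type*} [DecidableEq V] {M : Set (Finset V)} {e f g h : Finset V} {a b d y z : V}

/-- A hypergraph, given by its set of edges, any two of whose edges share at least two vertices.
The two edges may coincide, so every edge has at least two vertices. -/
def TwoIntersecting (M : Set (Finset V)) : Prop :=
  ∀ e ∈ M, ∀ f ∈ M, 2 ≤ #(e ∩ f)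

theorem TwoIntersecting.exists_mem_mem_ne (hM : TwoIntersecting M) (he : e ∈ M) (hf : f ∈ M)
    (x : V) : ∃ v ∈ e, v ∈ f ∧ v ≠ x := by
  obtain ⟨v, hv, hvx⟩ := exists_mem_ne (hM e he f hf) x
  exact ⟨v, mem_of_mem_inter_left hv, mem_of_mem_inter_right hv, hvx⟩

theorem TwoIntersecting.inter_nontrivial (hM : TwoIntersecting M) (he : e ∈ M) (hf : f ∈ M) :
    (e ∩ f).Nontrivial :=
  one_lt_card_iff_nontrivial.1 (hM e he f hf)

theorem exists_coloring_of_minimal_inter (hM : TwoIntersecting M)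
    (hanti : IsAntichain (· ⊆ ·) M) (he : e ∈ M) (hf : f ∈ M) (hef : e ≠ f)
    (hmeet : ∀ h ∈ M, ∃ v ∈ e, v ∈ f ∧ v ∈ h)
    (hmin : ∀ h ∈ M, ∀ k ∈ M, h ≠ k → h ∩ k ⊆ e ∩ f → e ∩ f ⊆ h ∩ k) :
    ∃ c : V → Fin 5, ∀ h ∈ M, 3 ≤ #(h.image c) := by
  obtain ⟨a, ha, b, hb, hab⟩ := hM.inter_nontrivial he hf
  let c : V → Fin 5 := fun v ↦
    if v = a then 0 else if v ∈ e ∩ f then 1 else if v ∈ e then 2 else if v ∈ f then 3 else 4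
  refine ⟨c, fun h hh ↦ ?_⟩
  have of_inter_subset (hsub : e ∩ f ⊆ h) {n : V} (hn : n ∈ h) (hnef : n ∉ e ∩ f) :
      3 ≤ #(h.image c) :=
    three_le_card_image (hsub ha) (hsub hb) hn (by grind) (by grind) (by grind)
  by_cases hp : ∃ p ∈ h, p ∈ e ∧ p ∉ f
  · by_cases hq : ∃ q ∈ h, q ∈ f ∧ q ∉ e
    · obtain ⟨p, hp, hpe, hpf⟩ := hp
      obtain ⟨q, hq, hqf, hqe⟩ := hq
      obtain ⟨x, hxe, hxf, hx⟩ := hmeet h hh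
      exact three_le_card_image hx hp hq
        (by grind) (by grind) (by grind)
    · have hhf : h ≠ f := by
        rintro rfl
        obtain ⟨q, hqf, hqe⟩ := not_subset.1 (hanti hh he hef.symm)
        exact hq ⟨q, hqf, hqf, hqe⟩
      obtain ⟨n, hn, hnf⟩ := not_subset.1 (hanti hh hf hhf)
      have hsub := hmin h hh f hf hhf (by grind)
      exact of_inter_subset (hsub.trans inter_subset_left) hn (by grind)
  · have hhe : h ≠ e := by
      rintro rfl
      obtain ⟨p, hpe, hpf⟩ := not_subset.1 (hanti hh hf hef)
      exact hp ⟨p, hpe, hpe, hpf⟩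
    obtain ⟨n, hn, hne⟩ := not_subset.1 (hanti hh he hhe)
    have hsub := hmin h hh e he hhe (by grind)
    exact of_inter_subset (hsub.trans inter_subset_left) hn (by grind)

theorem exists_minimal_inter (hM : M.Nontrivial) :
    ∃ e ∈ M, ∃ f ∈ M, e ≠ f ∧
      ∀ h ∈ M, ∀ k ∈ M, h ≠ k → h ∩ k ⊆ e ∩ f → e ∩ f ⊆ h ∩ k := by
  obtain ⟨e₀, he₀, f₀, hf₀, hne₀⟩ := hM
  obtain ⟨_, ⟨e, he, f, hf, hne, rfl⟩, hmin⟩ := exists_minimal_of_wellFoundedLT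
    (fun s ↦ ∃ e ∈ M, ∃ f ∈ M, e ≠ f ∧ e ∩ f = s) ⟨_, e₀, he₀, f₀, hf₀, hne₀, rfl⟩
  exact ⟨e, he, f, hf, hne, fun h hh k hk hhk hsub ↦ hmin ⟨h, hh, k, hk, hhk, rfl⟩ hsub⟩

/-- Three edges without a common vertex whose union is inclusion-minimal among the unions of such
triples of edges of `M`. -/
structure IsMinimalTriple (M : Set (Finset V)) (e f g : Finset V) : Prop where
  mem₁ : e ∈ M
  mem₂ : f ∈ M
  mem₃ : g ∈ M
  notMem₃ : ∀ v ∈ e, v ∈ f → v ∉ g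
  union_subset : ∀ e' ∈ M, ∀ f' ∈ M, ∀ g' ∈ M, (∀ v ∈ e', v ∈ f' → v ∉ g') →
    e' ∪ f' ∪ g' ⊆ e ∪ f ∪ g → e ∪ f ∪ g ⊆ e' ∪ f' ∪ g'

theorem exists_isMinimalTriple (he : e ∈ M) (hf : f ∈ M) (hg : g ∈ M)
    (hefg : ∀ v ∈ e, v ∈ f → v ∉ g) :
    ∃ e f g, IsMinimalTriple M e f g := by
  obtain ⟨_, ⟨e, he, f, hf, g, hg, hefg, rfl⟩, hmin⟩ := exists_minimal_of_wellFoundedLT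
    (fun s ↦ ∃ e ∈ M, ∃ f ∈ M, ∃ g ∈ M, (∀ v ∈ e, v ∈ f → v ∉ g) ∧ e ∪ f ∪ g = s)
    ⟨_, e, he, f, hf, g, hg, hefg, rfl⟩
  exact ⟨e, f, g, he, hf, hg, hefg, fun e' he' f' hf' g' hg' hefg' hsub ↦
    hmin ⟨e', he', f', hf', g', hg', hefg', rfl⟩ hsub⟩

namespace IsMinimalTriple

theorem of_union_subset (T : IsMinimalTriple M e f g) {e' f' g' : Finset V} (he' : e' ∈ M)
    (hf' : f' ∈ M) (hg' : g' ∈ M) (hefg' : ∀ v ∈ e', v ∈ f' → v ∉ g')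
    (hsub : e' ∪ f' ∪ g' ⊆ e ∪ f ∪ g) : IsMinimalTriple M e' f' g' where
  mem₁ := he'
  mem₂ := hf'
  mem₃ := hg'
  notMem₃ := hefg'
  union_subset e'' he'' f'' hf'' g'' hg'' hefg'' hsub'' :=
    hsub.trans <| T.union_subset e'' he'' f'' hf'' g'' hg'' hefg'' <| hsub''.trans hsub

theorem swap₁₂ (T : IsMinimalTriple M e f g) : IsMinimalTriple M f e g :=
  T.of_union_subset T.mem₂ T.mem₁ T.mem₃ (fun v hvf hve ↦ T.notMem₃ v hve hvf)
    (union_comm e f ▸ subset_rfl)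

theorem swap₂₃ (T : IsMinimalTriple M e f g) : IsMinimalTriple M e g f :=
  T.of_union_subset T.mem₁ T.mem₃ T.mem₂ (fun v hve hvg hvf ↦ T.notMem₃ v hve hvf hvg)
    (union_right_comm e f g ▸ subset_rfl)

theorem sdiff_subset (T : IsMinimalTriple M e f g) (hh : h ∈ M) (hsub : h ⊆ e ∪ f ∪ g)
    (hfg : ∀ v ∈ h, v ∈ f → v ∉ g) : e \ (f ∪ g) ⊆ h := by
  have hunion : e ∪ f ∪ g ⊆ h ∪ f ∪ g :=
    T.union_subset h hh f T.mem₂ g T.mem₃ hfg (by grind)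
  grind

end IsMinimalTriple

/-- The colouring for a minimal triple `e`, `f`, `g` in which `y` is private to `e` and `z` is
private to `f`; the vertex `b` is taken from `e ∩ g`. -/
def twoPrivateColoring (e f g : Finset V) (b y z v : V) : Fin 5 :=
  if v = b ∨ v = z then 0
  else if v ∈ e ∧ v ∈ g then 1
  else if v ∈ g then 2
  else if v ≠ y ∧ (v ∈ e ∨ v ∈ f) then 3
  else 4

theorem three_le_card_image_twoPrivateColoring_of_subset (hM : TwoIntersecting M)
    (T : IsMinimalTriple M e f g) (hb : b ∈ e ∩ g) (hy : y ∈ e \ (f ∪ g))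
    (hz : z ∈ f \ (e ∪ g)) (hh : h ∈ M) (hsub : h ⊆ e ∪ f ∪ g) (hhg : ¬h ⊆ g) :
    3 ≤ #(h.image (twoPrivateColoring e f g b y z)) := by
  set c := twoPrivateColoring e f g b y z
  have hefg := T.notMem₃
  by_cases hv : ∃ v ∈ h, v ∉ g ∧ v ≠ y ∧ v ≠ z
  · obtain ⟨v, hv, hvg, hvy, hvz⟩ := hv
    have hcv : c v = 3 := by grind [twoPrivateColoring]
    have hu : ∃ u ∈ h, c u = 2 ∨ c u = 4 := by
      by_cases hfg : ∀ v ∈ h, v ∈ f → v ∉ g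
      · exact ⟨y, T.sdiff_subset hh hsub hfg hy, by grind [twoPrivateColoring]⟩
      · push Not at hfg
        obtain ⟨u, hu, huf, hug⟩ := hfg
        exact ⟨u, hu, by grind [twoPrivateColoring]⟩
    have hw : ∃ w ∈ h, c w = 0 ∨ c w = 1 := by
      by_cases heg : ∀ v ∈ h, v ∈ e → v ∉ g
      · exact ⟨z, T.swap₁₂.sdiff_subset hh (by grind) heg hz, by grind [twoPrivateColoring]⟩
      · push Not at heg
        obtain ⟨w, hw, hwe, hwg⟩ := heg
        exact ⟨w, hw, by grind [twoPrivateColoring]⟩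
    obtain ⟨u, hu, hcu⟩ := hu
    obtain ⟨w, hw, hcw⟩ := hw
    exact three_le_card_image hv hu hw (by grind) (by grind) (by grind)
  · -- Here `h ⊆ g ∪ {y, z}`. If `y ∉ h`, then `z ∈ h` and the colour of `z`, shared only with `b`,
    -- is compensated by a vertex of `e ∩ g` other than `b`.
    obtain ⟨q, hq, hqf, hqz⟩ := hM.exists_mem_mem_ne hh T.mem₂ z
    have hcq : c q = 2 := by grind [twoPrivateColoring]
    by_cases hyh : y ∈ h
    · obtain ⟨p, hp, hpe, hpy⟩ := hM.exists_mem_mem_ne hh T.mem₁ y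
      have hcp : c p = 0 ∨ c p = 1 := by grind [twoPrivateColoring]
      have hcy : c y = 4 := by grind [twoPrivateColoring]
      exact three_le_card_image hp hq hyh (by grind) (by grind) (by grind)
    · obtain ⟨p, hp, hpe, hpb⟩ := hM.exists_mem_mem_ne hh T.mem₁ b
      have hzh : z ∈ h := by grind
      have hcp : c p = 1 := by grind [twoPrivateColoring]
      have hcz : c z = 0 := by grind [twoPrivateColoring]
      exact three_le_card_image hp hq hzh (by grind) (by grind) (by grind)

theorem three_le_card_image_twoPrivateColoring_of_not_subset (hM : TwoIntersecting M)
    (he : e ∈ M) (hf : f ∈ M) (hg : g ∈ M) (hefg : ∀ v ∈ e, v ∈ f → v ∉ g) (hb : b ∈ e ∩ g)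
    (hy : y ∈ e \ (f ∪ g)) (hz : z ∈ f \ (e ∪ g)) (hh : h ∈ M) (hsub : ¬h ⊆ e ∪ f ∪ g) :
    3 ≤ #(h.image (twoPrivateColoring e f g b y z)) := by
  set c := twoPrivateColoring e f g b y z
  obtain ⟨o, ho, hout⟩ := not_subset.1 hsub
  obtain ⟨p, hp, hpe, hpy⟩ := hM.exists_mem_mem_ne hh he y
  obtain ⟨q, hq, hqf, hqz⟩ := hM.exists_mem_mem_ne hh hf z
  obtain ⟨r, hr, hrg, -⟩ := hM.exists_mem_mem_ne hh hg z
  have hco : c o = 4 := by grind [twoPrivateColoring]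
  have hcp : c p = 0 ∨ c p = 1 ∨ c p = 3 := by grind [twoPrivateColoring]
  have hcq : c q = 2 ∨ c q = 3 := by grind [twoPrivateColoring]
  have hcr : c r = 0 ∨ c r = 1 ∨ c r = 2 := by grind [twoPrivateColoring]
  obtain hcq | hcq := hcq
  · exact three_le_card_image ho hq hp (by grind) (by grind) (by grind)
  · exact three_le_card_image ho hq hr (by grind) (by grind) (by grind)

theorem IsMinimalTriple.exists_coloring_of_two_private (hM : TwoIntersecting M)
    (hanti : IsAntichain (· ⊆ ·) M) (T : IsMinimalTriple M e f g)
    (he : (e \ (f ∪ g)).Nonempty) (hf : (f \ (e ∪ g)).Nonempty) :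
    ∃ c : V → Fin 5, ∀ h ∈ M, 3 ≤ #(h.image c) := by
  obtain ⟨y, hy⟩ := he
  obtain ⟨z, hz⟩ := hf
  obtain ⟨b, hb, b', hb', hbb'⟩ := hM.inter_nontrivial T.mem₁ T.mem₃
  obtain ⟨d, hd⟩ := (hM.inter_nontrivial T.mem₂ T.mem₃).nonempty
  have hefg := T.notMem₃
  refine ⟨twoPrivateColoring e f g b y z, fun h hh ↦ ?_⟩
  obtain rfl | hhg := eq_or_ne h g
  · exact three_le_card_image (mem_of_mem_inter_right hb) (mem_of_mem_inter_right hb')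
      (mem_of_mem_inter_right hd) (by grind [twoPrivateColoring])
      (by grind [twoPrivateColoring]) (by grind [twoPrivateColoring])
  · by_cases hsub : h ⊆ e ∪ f ∪ g
    · exact three_le_card_image_twoPrivateColoring_of_subset hM T hb hy hz hh hsub
        (hanti hh T.mem₃ hhg)
    · exact three_le_card_image_twoPrivateColoring_of_not_subset hM T.mem₁ T.mem₂ T.mem₃ hefg
        hb hy hz hh hsub

/-- The colouring for edges `e`, `f`, `g` without a common vertex when only `e` may have private
vertices; the vertices `a` and `d` are taken from `e ∩ f` and `f ∩ g`. -/
def coveredColoring (e f g : Finset V) (a d v : V) : Fin 5 :=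
  if v = a then 0
  else if v ∈ e ∧ v ∈ g then 1
  else if v ≠ d ∧ v ∈ f ∧ v ∈ g then 2
  else if v ∈ e then 3
  else 4

theorem three_le_card_image_coveredColoring_of_subset (hM : TwoIntersecting M) (hg : g ∈ M)
    (hefg : ∀ v ∈ e, v ∈ f → v ∉ g) (hgsub : g ⊆ e ∪ f) (ha : a ∈ e ∩ f) (hd : d ∈ f ∩ g)
    (hh : h ∈ M) (hsub : h ⊆ e ∪ g) (had : (∀ v ∈ h, v ∈ e → v ∉ g) → a ∈ h ∨ d ∈ h)
    (hhe : ¬h ⊆ e) (hhf : ¬h ⊆ f) (hhg : ¬h ⊆ g) :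
    3 ≤ #(h.image (coveredColoring e f g a d)) := by
  set c := coveredColoring e f g a d
  by_cases heg : ∀ v ∈ h, v ∈ e → v ∉ g
  · obtain ⟨p, hp, hpg, hpd⟩ := hM.exists_mem_mem_ne hh hg d
    obtain ⟨q, hq, hqf⟩ := not_subset.1 hhf
    have hcp : c p = 2 := by grind [coveredColoring]
    have hcq : c q = 3 := by grind [coveredColoring]
    obtain hah | hdh := had heg
    · have hca : c a = 0 := by grind [coveredColoring]
      exact three_le_card_image hp hq hah (by grind) (by grind) (by grind)
    · have hcd : c d = 4 := by grind [coveredColoring]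
      exact three_le_card_image hp hq hdh (by grind) (by grind) (by grind)
  · push Not at heg
    obtain ⟨x, hx, hxe, hxg⟩ := heg
    obtain ⟨p, hp, hpe⟩ := not_subset.1 hhe
    obtain ⟨q, hq, hqg⟩ := not_subset.1 hhg
    have hcx : c x = 1 := by grind [coveredColoring]
    have hcp : c p = 2 ∨ c p = 4 := by grind [coveredColoring]
    have hcq : c q = 0 ∨ c q = 3 := by grind [coveredColoring]
    exact three_le_card_image hx hp hq (by grind) (by grind) (by grind)

theorem three_le_card_image_coveredColoring_of_not_subset (hM : TwoIntersecting M) (he : e ∈ M)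
    (hf : f ∈ M) (hg : g ∈ M) (hefg : ∀ v ∈ e, v ∈ f → v ∉ g) (hfsub : f ⊆ e ∪ g)
    (hgsub : g ⊆ e ∪ f) (ha : a ∈ e ∩ f) (hh : h ∈ M) (hsub : ¬h ⊆ e ∪ g) :
    3 ≤ #(h.image (coveredColoring e f g a d)) := by
  set c := coveredColoring e f g a d
  obtain ⟨o, ho, hout⟩ := not_subset.1 hsub
  obtain ⟨p, hp, hpe, -⟩ := hM.exists_mem_mem_ne hh he d
  obtain ⟨q, hq, hqf, hqd⟩ := hM.exists_mem_mem_ne hh hf d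
  obtain ⟨r, hr, hrg, hrd⟩ := hM.exists_mem_mem_ne hh hg d
  have hco : c o = 4 := by grind [coveredColoring]
  have hcp : c p = 0 ∨ c p = 1 ∨ c p = 3 := by grind [coveredColoring]
  have hcq : c q = 0 ∨ c q = 2 ∨ c q = 3 := by grind [coveredColoring]
  have hcr : c r = 1 ∨ c r = 2 := by grind [coveredColoring]
  obtain hcr | hcr := hcr
  · exact three_le_card_image ho hr hq (by grind) (by grind) (by grind)
  · exact three_le_card_image ho hr hp (by grind) (by grind) (by grind)

theorem exists_coloring_of_covered (hM : TwoIntersecting M) (hanti : IsAntichain (· ⊆ ·) M)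
    (he : e ∈ M) (hf : f ∈ M) (hg : g ∈ M) (hefg : ∀ v ∈ e, v ∈ f → v ∉ g) (hfsub : f ⊆ e ∪ g)
    (hgsub : g ⊆ e ∪ f) (ha : a ∈ e ∩ f) (hd : d ∈ f ∩ g)
    (had : ∀ h ∈ M, h ⊆ e ∪ g → (∀ v ∈ h, v ∈ e → v ∉ g) → a ∈ h ∨ d ∈ h) :
    ∃ c : V → Fin 5, ∀ h ∈ M, 3 ≤ #(h.image c) := by
  obtain ⟨hae, haf⟩ := mem_inter.1 ha
  obtain ⟨hdf, hdg⟩ := mem_inter.1 hd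
  obtain ⟨a', hae', haf', haa'⟩ := hM.exists_mem_mem_ne he hf a
  obtain ⟨d', hdf', hdg', hdd'⟩ := hM.exists_mem_mem_ne hf hg d
  obtain ⟨b, hbe, hbg, -⟩ := hM.exists_mem_mem_ne he hg a
  set c := coveredColoring e f g a d
  have hca : c a = 0 := by grind [coveredColoring]
  have hcb : c b = 1 := by grind [coveredColoring]
  have hcd' : c d' = 2 := by grind [coveredColoring]
  have hca' : c a' = 3 := by grind [coveredColoring]
  have hcd : c d = 4 := by grind [coveredColoring]
  refine ⟨c, fun h hh ↦ ?_⟩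
  obtain rfl | hhe := eq_or_ne h e
  · exact three_le_card_image hae hbe hae' (by grind) (by grind) (by grind)
  obtain rfl | hhf := eq_or_ne h f
  · exact three_le_card_image haf haf' hdf (by grind) (by grind) (by grind)
  obtain rfl | hhg := eq_or_ne h g
  · exact three_le_card_image hbg hdg' hdg (by grind) (by grind) (by grind)
  by_cases hsub : h ⊆ e ∪ g
  · exact three_le_card_image_coveredColoring_of_subset hM hg hefg hgsub ha hd hh hsub
      (had h hh hsub) (hanti hh he hhe) (hanti hh hf hhf) (hanti hh hg hhg)
  · exact three_le_card_image_coveredColoring_of_not_subset hM he hf hg hefg hfsub hgsub ha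
      hh hsub

theorem IsMinimalTriple.exists_coloring_of_no_two_private (hM : TwoIntersecting M)
    (hanti : IsAntichain (· ⊆ ·) M) (T : IsMinimalTriple M e f g) (hfsub : f ⊆ e ∪ g)
    (hgsub : g ⊆ e ∪ f) (hcov : ∀ e f g, IsMinimalTriple M e f g → e ⊆ f ∪ g ∨ f ⊆ e ∪ g) :
    ∃ c : V → Fin 5, ∀ h ∈ M, 3 ≤ #(h.image c) := by
  obtain ⟨a, ha⟩ := (hM.inter_nontrivial T.mem₁ T.mem₂).nonempty
  obtain ⟨d, hd⟩ := (hM.inter_nontrivial T.mem₂ T.mem₃).nonempty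
  have hefg := T.notMem₃
  refine exists_coloring_of_covered hM hanti T.mem₁ T.mem₂ T.mem₃ hefg hfsub hgsub ha hd ?_
  intro h hh hsub hheg
  -- Otherwise `a` is private to `e` and `d` is private to `g` in the minimal triple `e`, `g`, `h`.
  have T' : IsMinimalTriple M e g h :=
    T.of_union_subset T.mem₁ T.mem₃ hh (by grind) (by grind)
  grind [hcov e g h T']

theorem IsMinimalTriple.exists_coloring (hM : TwoIntersecting M)
    (hanti : IsAntichain (· ⊆ ·) M) (T : IsMinimalTriple M e f g) :
    ∃ c : V → Fin 5, ∀ h ∈ M, 3 ≤ #(h.image c) := by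
  by_cases hcov : ∀ e f g, IsMinimalTriple M e f g → e ⊆ f ∪ g ∨ f ⊆ e ∪ g
  · have hef := hcov e f g T
    have heg := hcov e g f T.swap₂₃
    have hfg := hcov f g e T.swap₁₂.swap₂₃
    rw [union_comm g e, union_comm f e] at hfg
    by_cases hf : f ⊆ e ∪ g
    · by_cases hg : g ⊆ e ∪ f
      · exact T.exists_coloring_of_no_two_private hM hanti hf hg hcov
      · exact T.swap₁₂.swap₂₃.swap₁₂.exists_coloring_of_no_two_private hM hanti
          (by grind) (by grind) hcov
    · exact T.swap₁₂.exists_coloring_of_no_two_private hM hanti (by grind) (by grind) hcov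
  · push Not at hcov
    obtain ⟨e, f, g, T, he, hf⟩ := hcov
    exact T.exists_coloring_of_two_private hM hanti (sdiff_nonempty.2 he) (sdiff_nonempty.2 hf)

theorem TwoIntersecting.exists_coloring_of_isAntichain (hM : TwoIntersecting M)
    (hanti : IsAntichain (· ⊆ ·) M) (hnt : M.Nontrivial) :
    ∃ c : V → Fin 5, ∀ h ∈ M, 3 ≤ #(h.image c) := by
  by_cases hmeet : ∀ e ∈ M, ∀ f ∈ M, ∀ g ∈ M, ∃ v ∈ e, v ∈ f ∧ v ∈ g
  · obtain ⟨e, he, f, hf, hef, hmin⟩ := exists_minimal_inter hnt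
    exact exists_coloring_of_minimal_inter hM hanti he hf hef (hmeet e he f hf) hmin
  · push Not at hmeet
    obtain ⟨e, he, f, hf, g, hg, hefg⟩ := hmeet
    obtain ⟨e, f, g, T⟩ := exists_isMinimalTriple he hf hg hefg
    exact T.exists_coloring hM hanti

end TwoIntersecting

theorem two_intersecting_has_3strong_5coloring
    {V : Type*} [DecidableEq V] (H : Set (Finset V))
    (hsize : ∀ e ∈ H, 2 ≤ e.card)
    (hint : ∀ e ∈ H, ∀ f ∈ H, 2 ≤ (e ∩ f).card) :
    ∃ c : V → Fin 5, ∀ e ∈ H, min e.card 3 ≤ (e.image c).card := by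
  let M : Set (Finset V) := {m | Minimal (· ∈ H) m}
  have exists_minimal_subset {e : Finset V} (he : e ∈ H) : ∃ m ⊆ e, m ∈ M :=
    exists_minimal_le_of_wellFoundedLT (· ∈ H) e he
  obtain hsub | hnt := M.subsingleton_or_nontrivial
  · obtain rfl | ⟨e₀, he₀⟩ := H.eq_empty_or_nonempty
    · simp
    obtain ⟨m, -, hm⟩ := exists_minimal_subset he₀
    obtain ⟨a, ha, b, hb, hab⟩ := one_lt_card.1 (hsize m hm.prop)
    obtain ⟨c, hc⟩ := exists_coloring_of_common_pair (α := Fin 5) (by simp) hab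
    refine ⟨c, fun e he ↦ ?_⟩
    obtain ⟨m', hme, hm'⟩ := exists_minimal_subset he
    obtain rfl : m' = m := hsub hm' hm
    exact hc e (hme ha) (hme hb)
  · have hM : TwoIntersecting M := fun e he f hf ↦ hint e he.prop f hf.prop
    obtain ⟨c, hc⟩ := hM.exists_coloring_of_isAntichain (setOfPred_minimal_antichain _) hnt
    refine ⟨c, fun e he ↦ ?_⟩
    obtain ⟨m, hme, hm⟩ := exists_minimal_subset he
    exact (min_le_right _ _).trans <| (hc m hm).trans <| card_le_card (image_subset_image hme)
end

section
/- For every t ≥ 2, if a hypergraph H has property P_t (meaning: for every i with 2 ≤ i ≤ t, any i edges of H have a common intersection of size at least t+1-i), then H has a vertex coloring with at most t+1 colors such that every edge e receives at least min(|e|, t) distinct colors. -/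
/-!
Induct on `t`. For an inclusion-minimal edge `e`, the traces `f ∩ e` of the other edges satisfy
`P_(t-1)`: a common intersection of `i` traces is one of `i + 1` edges. Take a coloring with `t`
colors that is `(t-1)`-strong for these traces, and split its color classes inside `e` until `e`
itself receives `min |e| t` colors; splitting classes does not reduce the number of colors on any
subset of `e`. Finally give all vertices outside `e` one fresh color. By minimality each edge
`f ≠ e` leaves `e`, so it sees the fresh color on top of at least `min |f ∩ e| (t-1)` colors inside
`e`, and `|f ∩ e| ≥ t-1` by `P_t` for the pair `f`, `e`.
-/

open Finset

section Coloring

variable {V α β : Type*}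

theorem exists_subset_injOn_image_eq [DecidableEq α] (c : V → α) (e : Finset V) :
    ∃ s ⊆ e, Set.InjOn c s ∧ s.image c = e.image c := by
  obtain ⟨s, hse, hcs, hs⟩ := exists_subset_injOn_image_eq_of_surjOn (e : Set V) (e.image c)
    (f := c) (by rw [coe_image]; exact Set.surjOn_image c e)
  exact ⟨s, coe_subset.mp hse, hcs, hs⟩

/-- The coloring `c'` refines `c` on `e`: on `e`, every color class of `c'` lies in a color class
of `c`. -/
def RefinesOn (c' : V → β) (c : V → α) (e : Finset V) : Prop :=
  ∀ x ∈ e, ∀ y ∈ e, c' x = c' y → c x = c y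

theorem RefinesOn.card_image_le [DecidableEq α] [DecidableEq β] {c' : V → β} {c : V → α}
    {e f : Finset V} (h : RefinesOn c' c e) (hfe : f ⊆ e) : #(f.image c) ≤ #(f.image c') := by
  obtain ⟨s, hsf, hcs, hs⟩ := exists_subset_injOn_image_eq c f
  have hc's : Set.InjOn c' s := fun x hx y hy hxy =>
    hcs hx hy (h x (hfe (hsf hx)) y (hfe (hsf hy)) hxy)
  calc #(f.image c) = #s := by rw [← hs, card_image_of_injOn hcs]
    _ = #(s.image c') := (card_image_of_injOn hc's).symm
    _ ≤ #(f.image c') := card_le_card (image_subset_image hsf)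

theorem exists_injOn_eqOn_of_card_le [Fintype α] {c : V → α} {s t : Finset V} (hst : s ⊆ t)
    (hc : Set.InjOn c s) (ht : #t ≤ Fintype.card α) :
    ∃ g : V → α, Set.InjOn g t ∧ Set.EqOn g c s ∧ Set.EqOn g c (t : Set V)ᶜ := by
  classical
  obtain ⟨colors, hsub, -, hcard⟩ := exists_subsuperset_card_eq (subset_univ (s.image c))
    (card_image_le.trans (card_le_card hst)) ht
  obtain ⟨g, hg⟩ := Set.MapsTo.exists_equiv_extend_of_card_eq (α := t) (t := colors)
    (s := {x | (x : V) ∈ s}) (f := fun x => c x) (by simpa using hcard.symm)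
    (fun x hx => hsub (mem_image_of_mem c hx))
    (fun x hx y hy hxy => Subtype.ext (hc hx hy hxy))
  refine ⟨fun x => if hx : x ∈ t then g ⟨x, hx⟩ else c x, fun x hx y hy hxy => ?_,
    fun x hx => ?_, fun x hx => ?_⟩
  · rw [mem_coe] at hx hy
    simpa [hx, hy, Subtype.coe_inj] using hxy
  · simpa [hst hx] using hg ⟨x, hst hx⟩ hx
  · exact dif_neg hx

theorem exists_refinesOn_min_card_le [Fintype α] [DecidableEq α] (c : V → α) (e : Finset V) :
    ∃ c' : V → α, RefinesOn c' c e ∧ min #e (Fintype.card α) ≤ #(e.image c') := by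
  obtain ⟨s, hse, hcs, hs⟩ := exists_subset_injOn_image_eq c e
  have hs_le : #s ≤ min #e (Fintype.card α) :=
    le_min (card_le_card hse) (card_image_of_injOn hcs ▸ card_le_univ _)
  obtain ⟨t, hst, hte, ht⟩ := exists_subsuperset_card_eq hse hs_le (min_le_left _ _)
  obtain ⟨c', hc't, hc's, hc'_off⟩ :=
    exists_injOn_eqOn_of_card_le hst hcs (ht.trans_le (min_le_right _ _))
  -- A point outside `t` keeps the color of its representative in `s ⊆ t`.
  have refines_of_mem_of_notMem : ∀ x ∈ t, ∀ y ∈ e, y ∉ t → c' x = c' y → c x = c y := by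
    intro x hx y hye hyt hxy
    obtain ⟨z, hz, hzy⟩ := mem_image.mp (hs ▸ mem_image_of_mem c hye)
    have hxz : x = z := hc't hx (hst hz) (by rw [hxy, hc'_off hyt, ← hzy, hc's hz])
    rw [hxz, hzy]
  refine ⟨c', fun x hx y hy hxy => ?_, ?_⟩
  · by_cases hxt : x ∈ t <;> by_cases hyt : y ∈ t
    · rw [hc't hxt hyt hxy]
    · exact refines_of_mem_of_notMem x hxt y hy hyt hxy
    · exact (refines_of_mem_of_notMem y hyt x hx hxt hxy.symm).symm
    · rwa [hc'_off hxt, hc'_off hyt] at hxy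
  · calc min #e (Fintype.card α) = #(t.image c') := by rw [card_image_of_injOn hc't, ht]
      _ ≤ #(e.image c') := card_le_card (image_subset_image hte)

end Coloring

section FreshColor

variable {V : Type*} [DecidableEq V] {n : ℕ}

/-- The coloring that agrees with `c` on `e` and gives every vertex outside `e` one additional
color, encoded as `Fin.last n`. -/
def freshColorOutside (e : Finset V) (c : V → Fin n) (v : V) : Fin (n + 1) :=
  if v ∈ e then (c v).castSucc else Fin.last n

theorem image_freshColorOutside_of_subset {e f : Finset V} (c : V → Fin n) (hfe : f ⊆ e) :
    f.image (freshColorOutside e c) = (f.image c).map Fin.castSuccEmb := by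
  rw [map_eq_image, image_image]
  exact image_congr fun v hv => if_pos (hfe hv)

theorem image_freshColorOutside_of_not_subset {e f : Finset V} (c : V → Fin n) (hfe : ¬f ⊆ e) :
    f.image (freshColorOutside e c) =
      insert (Fin.last n) (((f ∩ e).image c).map Fin.castSuccEmb) := by
  have outside_image : (f \ e).image (freshColorOutside e c) = {Fin.last n} := by
    have eqOn_last : Set.EqOn (freshColorOutside e c) (fun _ => Fin.last n) ↑(f \ e) :=
      fun v hv => if_neg (mem_sdiff.mp hv).2
    rw [image_congr eqOn_last, image_const (sdiff_nonempty.mpr hfe)]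
  rw [← image_freshColorOutside_of_subset c inter_subset_right, insert_eq, ← outside_image,
    ← image_union, sdiff_union_inter]

theorem card_image_freshColorOutside_of_subset {e f : Finset V} (c : V → Fin n) (hfe : f ⊆ e) :
    #(f.image (freshColorOutside e c)) = #(f.image c) := by
  rw [image_freshColorOutside_of_subset c hfe, card_map]

theorem card_image_freshColorOutside_of_not_subset {e f : Finset V} (c : V → Fin n)
    (hfe : ¬f ⊆ e) : #(f.image (freshColorOutside e c)) = #((f ∩ e).image c) + 1 := by
  rw [image_freshColorOutside_of_not_subset c hfe, card_insert_of_notMem (by simp), card_map]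

end FreshColor

section PropertyP

variable {V : Type*}

/-- Property `P_t` of the hypergraph with edge set `H`. That `i` edges meet in at least `t + 1 - i`
vertices is expressed by a set `u` of that many vertices contained in all of them. -/
def PropertyP (t : ℕ) (H : Set (Finset V)) : Prop :=
  ∀ s : Finset (Finset V), ↑s ⊆ H → 2 ≤ #s → #s ≤ t →
    ∃ u : Finset V, t + 1 - #s ≤ #u ∧ ∀ f ∈ s, u ⊆ f

/-- A `t`-strong coloring of the hypergraph with edge set `H`: every edge `e` receives at least
`min |e| t` distinct colors. -/
def IsStrongColoring {α : Type*} [DecidableEq α] (t : ℕ) (H : Set (Finset V)) (c : V → α) : Prop :=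
  ∀ e ∈ H, min #e t ≤ #(e.image c)

variable [DecidableEq V] {t : ℕ} {H : Set (Finset V)} {e f : Finset V}

/-- The trace on `e` of the hypergraph with edge set `H`, the edge `e` itself being discarded. -/
def edgeTrace (H : Set (Finset V)) (e : Finset V) : Set (Finset V) :=
  (· ∩ e) '' (H \ {e})

theorem PropertyP.le_card_inter_add_one (hP : PropertyP t H) (he : e ∈ H) (hf : f ∈ H)
    (hfe : f ≠ e) : t ≤ #(f ∩ e) + 1 := by
  rcases lt_or_ge t 2 with ht | ht
  · lia
  obtain ⟨u, hu, hsub⟩ := hP {f, e} (by simp [Set.insert_subset_iff, he, hf])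
    (card_pair hfe).ge (by rwa [card_pair hfe])
  have hu_le : #u ≤ #(f ∩ e) :=
    card_le_card (subset_inter (hsub f (by simp)) (hsub e (by simp)))
  rw [card_pair hfe] at hu
  lia

theorem PropertyP.edgeTrace (hP : PropertyP (t + 1) H) (he : e ∈ H) :
    PropertyP t (edgeTrace H e) := by
  intro s hs hs_two hs_le
  obtain ⟨r, hrH, hr_inj, rfl⟩ := exists_subset_injOn_image_eq_of_surjOn (H \ {e}) s hs
  have her : e ∉ r := fun h => (hrH h).2 rfl
  rw [card_image_of_injOn hr_inj] at hs_two hs_le ⊢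
  obtain ⟨u, hu, hsub⟩ := hP (insert e r)
    (by rw [coe_insert]; exact Set.insert_subset he (hrH.trans Set.sdiff_subset))
    (by rw [card_insert_of_notMem her]; lia) (by rw [card_insert_of_notMem her]; lia)
  rw [card_insert_of_notMem her] at hu
  refine ⟨u, by lia, forall_mem_image.mpr fun f hf => ?_⟩
  exact subset_inter (hsub f (mem_insert_of_mem hf)) (hsub e (mem_insert_self e r))

theorem IsStrongColoring.freshColorOutside {c c' : V → Fin (t + 1)}
    (hc : IsStrongColoring t (edgeTrace H e) c) (hP : PropertyP (t + 1) H)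
    (he : Minimal (· ∈ H) e) (href : RefinesOn c' c e) (hc'e : min #e (t + 1) ≤ #(e.image c')) :
    IsStrongColoring (t + 1) H (freshColorOutside e c') := by
  intro f hf
  by_cases hfe : f = e
  · subst hfe
    rwa [card_image_freshColorOutside_of_subset c' Subset.rfl]
  have hf_not_subset : ¬f ⊆ e := fun h => hfe (he.eq_of_le hf h)
  have ht_le : t ≤ #(f ∩ e) :=
    Nat.le_of_succ_le_succ (hP.le_card_inter_add_one he.prop hf hfe)
  calc min #f (t + 1) ≤ t + 1 := min_le_right _ _
    _ = min #(f ∩ e) t + 1 := by rw [min_eq_right ht_le]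
    _ ≤ #((f ∩ e).image c) + 1 := Nat.succ_le_succ (hc _ ⟨f, ⟨hf, hfe⟩, rfl⟩)
    _ ≤ #((f ∩ e).image c') + 1 := Nat.succ_le_succ (href.card_image_le inter_subset_right)
    _ = _ := (card_image_freshColorOutside_of_not_subset c' hf_not_subset).symm

end PropertyP

theorem PropertyP.exists_isStrongColoring {V : Type*} {t : ℕ} {H : Set (Finset V)}
    (hP : PropertyP t H) : ∃ c : V → Fin (t + 1), IsStrongColoring t H c := by
  classical
  induction t generalizing H with
  | zero => exact ⟨fun _ => 0, fun e _ => by simp⟩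
  | succ t ih =>
    rcases H.eq_empty_or_nonempty with rfl | hne
    · exact ⟨fun _ => 0, by simp [IsStrongColoring]⟩
    obtain ⟨e, he⟩ := exists_minimal_of_wellFoundedLT (· ∈ H) hne
    obtain ⟨c, hc⟩ := ih (hP.edgeTrace he.prop)
    obtain ⟨c', href, hc'e⟩ := exists_refinesOn_min_card_le c e
    rw [Fintype.card_fin] at hc'e
    exact ⟨freshColorOutside e c', hc.freshColorOutside hP he href hc'e⟩

theorem property_Pt_has_tstrong_coloring
    {V : Type*} [DecidableEq V] (t : ℕ) (ht : 2 ≤ t) (H : Set (Finset V))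
    (hPt : ∀ s : Finset (Finset V), ↑s ⊆ H → ∀ h2 : 2 ≤ s.card, s.card ≤ t →
      t + 1 - s.card ≤ (s.inf' (Finset.card_pos.mp (by omega)) id).card) :
    ∃ c : V → Fin (t + 1), ∀ e ∈ H, min e.card t ≤ (e.image c).card := by
  have hP : PropertyP t H := fun s hsH h2 hs_le =>
    ⟨_, hPt s hsH h2 hs_le, fun _ hf => inf'_le id hf⟩
  exact hP.exists_isStrongColoring
end
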